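/- arXiv:2206.01654 — 2 statements merged into one kernel-verified Lean document; each statement's English description precedes it below -/
import Mathlib

section
/- Suppose (Ω_i, 𝒜_i) = (ℝ, ℬ(ℝ)) for all i = 1,…,n. Let P* be a (σ-additive) probability measure on ℬ(ℝ^n) such that all but possibly one of its marginals P*∘π_i^{-1} are discrete and P*(A) = 1 for some compact A ⊂ ℝ^n, and let 𝒰 = {Q ∈ ℙ : Q ≪ P* and (π_1,…,π_n) is a Q-martingale}. Then the condition 'Σ_{i=1}^n μ_i(f_i) ≥ inf_{Q ∈ 𝒰} Q(⊕_{i=1}^n f_i) for all bounded Borel f_1,…,f_n : ℝ → ℝ' (with inf ∅ = ∞) holds if and only if there exists a σ-additive probability measure P on ℬ(ℝ^n) with marginals μ_1,…,μ_n such that P ≪ P* and (π_1,…,π_n) is a P-martingale. -/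
open MeasureTheory Set ENNReal

namespace FATransport

variable {α : Type*} [MeasurableSpace α]

/-- The collection of measurable sets of `α` (the σ-field `𝒜`), as a type. -/
abbrev MSet (α : Type*) [MeasurableSpace α] := {A : Set α // MeasurableSet A}

/-- A finitely additive probability on the σ-field of `α`, viewed as an element
of `[0,1]^𝒜`: it maps the whole space to `1` and is additive on disjoint pairs. -/
def IsFAP (P : MSet α → unitInterval) : Prop :=
  (P ⟨Set.univ, MeasurableSet.univ⟩ : ℝ) = 1 ∧
    ∀ A B : MSet α, Disjoint A.1 B.1 →
      (P ⟨A.1 ∪ B.1, A.2.union B.2⟩ : ℝ) = (P A : ℝ) + (P B : ℝ)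

/-- `ℙ`, the set of all finitely additive probabilities on `𝒜`, as a subset of
`[0,1]^𝒜` (with its product topology). -/
def FAPs (α : Type*) [MeasurableSpace α] : Set (MSet α → unitInterval) :=
  {P | IsFAP P}

/-- Integral of a simple function with respect to a finitely additive set function. -/
noncomputable def simpleInt (P : MSet α → unitInterval) (s : SimpleFunc α ℝ) : ℝ :=
  ∑ y ∈ s.range, y * (P ⟨(⇑s) ⁻¹' {y}, s.measurableSet_fiber y⟩ : ℝ)

/-- `P(f)` for a bounded measurable `f : α → ℝ`: the supremum of the integrals of
simple functions below `f` (for a f.a.p. `P` and bounded measurable `f` this agrees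
with the integral defined by uniform approximation by simple functions). -/
noncomputable def fapInt (P : MSet α → unitInterval) (f : α → ℝ) : ℝ :=
  sSup (simpleInt P '' {s : SimpleFunc α ℝ | ∀ x, s x ≤ f x})

/-- `P(c) = sup_k P(c ∧ k)` for a `[0,∞]`-valued `c`. -/
noncomputable def fapIntTop (P : MSet α → unitInterval) (c : α → ℝ≥0∞) : ℝ≥0∞ :=
  ⨆ k : ℕ, ENNReal.ofReal (fapInt P (fun x => (c x ⊓ (k : ℝ≥0∞)).toReal))

/-- A real-valued `f` is `P`-integrable iff `P(|f|) < ∞`. -/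
def FapIntegrable (P : MSet α → unitInterval) (f : α → ℝ) : Prop :=
  fapIntTop P (fun x => ENNReal.ofReal |f x|) < ⊤

/-- `P(f) = P(f⁺) - P(f⁻)` for a (`P`-integrable) real-valued `f`. -/
noncomputable def fapIntR (P : MSet α → unitInterval) (f : α → ℝ) : ℝ :=
  (fapIntTop P (fun x => ENNReal.ofReal (f x))).toReal -
    (fapIntTop P (fun x => ENNReal.ofReal (-f x))).toReal

/-- `P ≪ Q` for finitely additive probabilities. -/
def FapAC (P Q : MSet α → unitInterval) : Prop :=
  ∀ A : MSet α, (Q A : ℝ) = 0 → (P A : ℝ) = 0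

variable {n : ℕ} {Ω : Fin n → Type*} [∀ i, MeasurableSpace (Ω i)]

/-- `M`, the set of finitely additive probabilities on `𝒜 = ⊗ᵢ 𝒜ᵢ` whose
`i`-th marginal is `μ i` for every `i`. -/
def couplings (μ : ∀ i, Measure (Ω i)) : Set (MSet (∀ i, Ω i) → unitInterval) :=
  {P | IsFAP P ∧ ∀ (i : Fin n) (B : Set (Ω i)) (hB : MeasurableSet B),
    (P ⟨(fun ω => ω i) ⁻¹' B, (measurable_pi_apply i) hB⟩ : ℝ) = (μ i B).toReal}

end FATransport

namespace FATransport

/-- `(π_1, …, π_n)` is a `P`-martingale for a finitely additive probability `P` on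
`ℬ(ℝⁿ)`: each `P(|π_i|) < ∞`, `P(π_1) = 0`, and `P((π_{i+1} - π_i) g(π_1,…,π_i)) = 0`
for every bounded Borel `g` (encoded as a bounded Borel function on `ℝⁿ` depending
only on the first `i` coordinates). -/
def IsMartFAP {n : ℕ} (hn : 0 < n) (P : MSet (Fin n → ℝ) → unitInterval) : Prop :=
  (∀ i : Fin n, fapIntTop P (fun ω => ENNReal.ofReal |ω i|) < ⊤) ∧
    fapIntR P (fun ω => ω ⟨0, hn⟩) = 0 ∧
    ∀ i j : Fin n, (j : ℕ) = (i : ℕ) + 1 →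
      ∀ g : (Fin n → ℝ) → ℝ, Measurable g → (∃ C, ∀ x, |g x| ≤ C) →
        (∀ x y : Fin n → ℝ, (∀ k : Fin n, k ≤ i → x k = y k) → g x = g y) →
        fapIntR P (fun ω => (ω j - ω i) * g ω) = 0

end FATransport

namespace FATransport

variable {n : ℕ} {Ω : Fin n → Type*} [∀ i, MeasurableSpace (Ω i)]

/-- Condition (4.1) of the paper: `Σᵢ μᵢ(fᵢ) ≥ inf_{Q ∈ 𝒰} Q(⊕ᵢ fᵢ)` for all bounded
measurable `fᵢ : Ωᵢ → ℝ`. The infimum is taken in `EReal`, so that `inf ∅ = ∞` (and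
the condition fails when `𝒰 = ∅`). -/
def DualCond (μ : ∀ i, Measure (Ω i))
    (U : Set (MSet (∀ i, Ω i) → unitInterval)) : Prop :=
  ∀ f : ∀ i, Ω i → ℝ, (∀ i, Measurable (f i)) → (∀ i, ∃ C, ∀ x, |f i x| ≤ C) →
    (⨅ Q ∈ U, ((fapInt Q (fun ω => ∑ i, f i (ω i)) : ℝ) : EReal)) ≤
      ((∑ i, ∫ x, f i x ∂(μ i) : ℝ) : EReal)

end FATransport

namespace FATransport

/-- `(π_1,…,π_n)` is a martingale under a (σ-additive) probability measure `P` on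
`ℬ(ℝⁿ)`. -/
def IsMartMeas {n : ℕ} (hn : 0 < n) (P : MeasureTheory.Measure (Fin n → ℝ)) : Prop :=
  (∀ i : Fin n, Integrable (fun ω => ω i) P) ∧
    (∫ ω, ω ⟨0, hn⟩ ∂P) = 0 ∧
    ∀ i j : Fin n, (j : ℕ) = (i : ℕ) + 1 →
      ∀ g : (Fin n → ℝ) → ℝ, Measurable g → (∃ C, ∀ x, |g x| ≤ C) →
        (∀ x y : Fin n → ℝ, (∀ k : Fin n, k ≤ i → x k = y k) → g x = g y) →
        (∫ ω, (ω j - ω i) * g ω ∂P) = 0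

section FAPaux

open Filter Topology

variable {α : Type*} [MeasurableSpace α]

/-- value on arbitrary sets -/
noncomputable def fval (Q : MSet α → unitInterval) (A : Set α) : ℝ :=
  open Classical in if h : MeasurableSet A then (Q ⟨A, h⟩ : ℝ) else 0

lemma fval_eq (Q : MSet α → unitInterval) {A : Set α} (h : MeasurableSet A) :
    fval Q A = (Q ⟨A, h⟩ : ℝ) := by simp [fval, h]

lemma fval_nonneg (Q : MSet α → unitInterval) (A : Set α) : 0 ≤ fval Q A := by
  unfold fval
  split_ifs
  · exact unitInterval.nonneg _
  · exact le_rfl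

lemma fval_union {Q : MSet α → unitInterval} (hQ : IsFAP Q) {A B : Set α}
    (hA : MeasurableSet A) (hB : MeasurableSet B) (h : Disjoint A B) :
    fval Q (A ∪ B) = fval Q A + fval Q B := by
  rw [fval_eq Q hA, fval_eq Q hB, fval_eq Q (hA.union hB)]
  exact hQ.2 ⟨A, hA⟩ ⟨B, hB⟩ h

lemma fval_empty {Q : MSet α → unitInterval} (hQ : IsFAP Q) : fval Q (∅ : Set α) = 0 := by
  have := fval_union hQ (A := ∅) (B := ∅) .empty .empty (by simp)
  simp at this
  linarith

lemma fval_univ {Q : MSet α → unitInterval} (hQ : IsFAP Q) : fval Q (univ : Set α) = 1 := by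
  rw [fval_eq Q .univ]; exact hQ.1

lemma fval_mono {Q : MSet α → unitInterval} (hQ : IsFAP Q) {A B : Set α}
    (hA : MeasurableSet A) (hB : MeasurableSet B) (h : A ⊆ B) : fval Q A ≤ fval Q B := by
  have := fval_union hQ hA (hB.diff hA) disjoint_sdiff_right
  rw [union_sdiff_cancel h] at this
  linarith [fval_nonneg Q (B \ A)]

lemma fval_union_le {Q : MSet α → unitInterval} (hQ : IsFAP Q) {A B : Set α}
    (hA : MeasurableSet A) (hB : MeasurableSet B) :
    fval Q (A ∪ B) ≤ fval Q A + fval Q B := by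
  have := fval_union hQ hA (hB.diff hA) disjoint_sdiff_right
  rw [union_sdiff_self] at this
  have := fval_mono hQ (hB.diff hA) hB sdiff_subset
  linarith

noncomputable def fT (Q : MSet α → unitInterval) (A : Set α) : ℝ →L[ℝ] ℝ :=
  fval Q A • ContinuousLinearMap.id ℝ ℝ

lemma fT_apply (Q : MSet α → unitInterval) (A : Set α) (x : ℝ) : fT Q A x = fval Q A * x := by
  simp [fT]

lemma simpleInt_eq (Q : MSet α → unitInterval) (s : SimpleFunc α ℝ) :
    simpleInt Q s = s.setToSimpleFunc (fT Q) := by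
  unfold simpleInt SimpleFunc.setToSimpleFunc
  refine Finset.sum_congr rfl fun y _ => ?_
  rw [fT_apply, fval_eq Q (s.measurableSet_fiber y), mul_comm]

lemma fT_add {Q : MSet α → unitInterval} (hQ : IsFAP Q) :
    FinMeasAdditive (0 : Measure α) (fT Q) := by
  intro A B hA hB _ _ h
  simp only [fT, fval_union hQ hA hB h, add_smul]

lemma simpleInt_add {Q : MSet α → unitInterval} (hQ : IsFAP Q) (s t : SimpleFunc α ℝ) :
    simpleInt Q (s + t) = simpleInt Q s + simpleInt Q t := by
  simp only [simpleInt_eq]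
  exact SimpleFunc.setToSimpleFunc_add _ (fT_add hQ) integrable_zero_measure
    integrable_zero_measure

lemma simpleInt_mono {Q : MSet α → unitInterval} (hQ : IsFAP Q) {s t : SimpleFunc α ℝ}
    (h : s ≤ t) : simpleInt Q s ≤ simpleInt Q t := by
  simp only [simpleInt_eq]
  refine SimpleFunc.setToSimpleFunc_mono (fT_add hQ) ?_ integrable_zero_measure
    integrable_zero_measure h
  intro A _ _ x hx
  rw [fT_apply]
  exact mul_nonneg (fval_nonneg _ _) hx

lemma simpleInt_indicator {Q : MSet α → unitInterval} (hQ : IsFAP Q) {A : Set α}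
    (hA : MeasurableSet A) (x : ℝ) :
    simpleInt Q (SimpleFunc.piecewise A hA (SimpleFunc.const α x) (SimpleFunc.const α 0))
      = fval Q A * x := by
  rw [simpleInt_eq, SimpleFunc.setToSimpleFunc_indicator _ _ hA, fT_apply]
  simp [fT, fval_empty hQ]

lemma simpleInt_const {Q : MSet α → unitInterval} (hQ : IsFAP Q) (x : ℝ) :
    simpleInt Q (SimpleFunc.const α x) = x := by
  rw [simpleInt_eq, SimpleFunc.setToSimpleFunc_const, fT_apply, fval_univ hQ, one_mul]
  simp [fT, fval_empty hQ]

lemma fap_bdd {Q : MSet α → unitInterval} (hQ : IsFAP Q) {f : α → ℝ} {M : ℝ}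
    (hf : ∀ x, f x ≤ M) : BddAbove (simpleInt Q '' {s : SimpleFunc α ℝ | ∀ x, s x ≤ f x}) := by
  refine ⟨M, ?_⟩
  rintro _ ⟨s, hs, rfl⟩
  rw [← simpleInt_const hQ M]
  exact simpleInt_mono hQ fun x => (hs x).trans (hf x)

lemma fap_ne (Q : MSet α → unitInterval) {f : α → ℝ} {M : ℝ} (hf : ∀ x, -M ≤ f x) :
    (simpleInt Q '' {s : SimpleFunc α ℝ | ∀ x, s x ≤ f x}).Nonempty :=
  ⟨_, SimpleFunc.const α (-M), fun x => hf x, rfl⟩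

lemma le_fapInt {Q : MSet α → unitInterval} (hQ : IsFAP Q) {f : α → ℝ} {M : ℝ}
    (hf : ∀ x, f x ≤ M) {s : SimpleFunc α ℝ} (hs : ∀ x, s x ≤ f x) :
    simpleInt Q s ≤ fapInt Q f :=
  le_csSup (fap_bdd hQ hf) ⟨s, hs, rfl⟩

lemma fapInt_le {Q : MSet α → unitInterval} (hQ : IsFAP Q) {f : α → ℝ} {M : ℝ}
    (hf : ∀ x, -M ≤ f x) {s : SimpleFunc α ℝ} (hs : ∀ x, f x ≤ s x) :
    fapInt Q f ≤ simpleInt Q s := by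
  refine csSup_le (fap_ne Q hf) ?_
  rintro _ ⟨t, ht, rfl⟩
  exact simpleInt_mono hQ fun x => (ht x).trans (hs x)

lemma fapInt_simple {Q : MSet α → unitInterval} (hQ : IsFAP Q) (s : SimpleFunc α ℝ) :
    fapInt Q s = simpleInt Q s := by
  obtain ⟨C, hC⟩ := s.exists_forall_norm_le
  have h := fun x => abs_le.1 (hC x)
  exact le_antisymm (fapInt_le hQ (fun x => (h x).1) fun x => le_rfl)
    (le_fapInt hQ (fun x => (h x).2) fun x => le_rfl)

lemma fapInt_ae_le {Q : MSet α → unitInterval} (hQ : IsFAP Q) {f g : α → ℝ} {M : ℝ}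
    (hf : ∀ x, |f x| ≤ M) (hg : ∀ x, |g x| ≤ M) {N : Set α} (hN : MeasurableSet N)
    (hN0 : fval Q N = 0) (hfg : ∀ x, x ∉ N → f x ≤ g x) : fapInt Q f ≤ fapInt Q g := by
  refine csSup_le (fap_ne Q fun x => (abs_le.1 (hf x)).1) ?_
  rintro _ ⟨s, hs, rfl⟩
  let s' := SimpleFunc.piecewise N hN (SimpleFunc.const α (-M)) s
  let t := SimpleFunc.piecewise N hN (SimpleFunc.const α (2 * M)) (SimpleFunc.const α 0)
  have h1 : simpleInt Q s ≤ simpleInt Q (s' + t) := by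
    refine simpleInt_mono hQ fun x => ?_
    have h2 := (abs_le.1 (hf x)).2
    have h3 := hs x
    by_cases hx : x ∈ N
    · simp [s', t, hx]; linarith
    · simp [s', t, hx]
  rw [simpleInt_add hQ, simpleInt_indicator hQ, hN0, zero_mul, add_zero] at h1
  refine h1.trans (le_fapInt hQ (fun x => (abs_le.1 (hg x)).2) fun x => ?_)
  by_cases hx : x ∈ N
  · simpa [s', hx] using (abs_le.1 (hg x)).1
  · simpa [s', hx] using (hs x).trans (hfg x hx)

lemma fapInt_ae_eq {Q : MSet α → unitInterval} (hQ : IsFAP Q) {f g : α → ℝ} {M : ℝ}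
    (hf : ∀ x, |f x| ≤ M) (hg : ∀ x, |g x| ≤ M) {N : Set α} (hN : MeasurableSet N)
    (hN0 : fval Q N = 0) (hfg : ∀ x, x ∉ N → f x = g x) : fapInt Q f = fapInt Q g :=
  le_antisymm (fapInt_ae_le hQ hf hg hN hN0 fun x hx => (hfg x hx).le)
    (fapInt_ae_le hQ hg hf hN hN0 fun x hx => (hfg x hx).ge)

lemma exists_simple {f : α → ℝ} (hf : Measurable f) {M : ℝ} (hM : ∀ x, |f x| ≤ M) {ε : ℝ}
    (hε : 0 < ε) : ∃ s : SimpleFunc α ℝ, (∀ x, s x ≤ f x) ∧ ∀ x, f x ≤ s x + ε := by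
  have hm : Measurable fun x => (⌊f x / ε⌋ : ℤ) := Int.measurable_floor.comp (hf.div_const ε)
  have hfin : (range fun x => (⌊f x / ε⌋ : ℤ)).Finite := by
    refine (Set.finite_Icc (⌊-M / ε⌋) (⌊M / ε⌋)).subset ?_
    rintro _ ⟨x, rfl⟩
    have := abs_le.1 (hM x)
    exact ⟨Int.floor_mono (by gcongr; exact this.1), Int.floor_mono (by gcongr; exact this.2)⟩
  let s0 : SimpleFunc α ℤ := ⟨_, fun y => hm (measurableSet_singleton y), hfin⟩
  refine ⟨s0.map fun k : ℤ => (k : ℝ) * ε, fun x => ?_, fun x => ?_⟩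
  · change (⌊f x / ε⌋ : ℝ) * ε ≤ f x
    rw [← le_div_iff₀ hε]; exact Int.floor_le _
  · change f x ≤ (⌊f x / ε⌋ : ℝ) * ε + ε
    have := (Int.lt_floor_add_one (f x / ε)).le
    rw [div_le_iff₀ hε] at this
    linarith

/-- uniform approximation of integrals by simple integrals -/
lemma exists_approx {f : α → ℝ} (hf : Measurable f) {M : ℝ} (hM : ∀ x, |f x| ≤ M) :
    ∃ s : ℕ → SimpleFunc α ℝ, (∀ k x, s k x ≤ f x) ∧ (∀ k x, f x ≤ s k x + 1 / ((k : ℝ) + 1)) := by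
  have h := fun k : ℕ => exists_simple hf hM (ε := 1 / ((k : ℝ) + 1)) (by positivity)
  choose s h1 h2 using h
  exact ⟨s, h1, h2⟩

lemma approx_bound {Q : MSet α → unitInterval} (hQ : IsFAP Q) {f : α → ℝ} {M : ℝ}
    (hM : ∀ x, |f x| ≤ M) {s : SimpleFunc α ℝ} {ε : ℝ} (h1 : ∀ x, s x ≤ f x)
    (h2 : ∀ x, f x ≤ s x + ε) : |fapInt Q f - simpleInt Q s| ≤ ε := by
  have a := le_fapInt hQ (fun x => (abs_le.1 (hM x)).2) h1
  have b := fapInt_le hQ (fun x => (abs_le.1 (hM x)).1) (s := s + SimpleFunc.const α ε) h2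
  rw [simpleInt_add hQ, simpleInt_const hQ] at b
  rw [abs_le]; constructor
  · linarith [(sub_nonneg.2 a), sub_nonneg.2 a]
  · linarith

lemma tendsto_approx {Q : MSet α → unitInterval} (hQ : IsFAP Q) {f : α → ℝ} {M : ℝ}
    (hM : ∀ x, |f x| ≤ M) {s : ℕ → SimpleFunc α ℝ} (h1 : ∀ k x, s k x ≤ f x)
    (h2 : ∀ k x, f x ≤ s k x + 1 / ((k : ℝ) + 1)) :
    Tendsto (fun k => simpleInt Q (s k)) atTop (𝓝 (fapInt Q f)) := by
  rw [tendsto_iff_dist_tendsto_zero]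
  refine squeeze_zero (fun _ => dist_nonneg) (fun k => ?_) tendsto_one_div_add_atTop_nhds_zero_nat
  rw [dist_comm, Real.dist_eq]
  exact approx_bound hQ hM (h1 k) (h2 k)

lemma continuous_simpleInt (s : SimpleFunc α ℝ) :
    Continuous fun Q : MSet α → unitInterval => simpleInt Q s := by
  unfold simpleInt
  fun_prop

lemma continuousOn_fapInt {f : α → ℝ} (hf : Measurable f) {M : ℝ} (hM : ∀ x, |f x| ≤ M) :
    ContinuousOn (fun Q : MSet α → unitInterval => fapInt Q f) (FAPs α) := by
  obtain ⟨s, h1, h2⟩ := exists_approx hf hM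
  have : TendstoUniformlyOn (fun k (Q : MSet α → unitInterval) => simpleInt Q (s k))
      (fun Q => fapInt Q f) atTop (FAPs α) := by
    rw [Metric.tendstoUniformlyOn_iff]
    intro ε hε
    have := (tendsto_one_div_add_atTop_nhds_zero_nat (𝕜 := ℝ)).eventually (gt_mem_nhds hε)
    filter_upwards [this] with k hk Q hQ
    rw [Real.dist_eq]
    exact (approx_bound hQ hM (h1 k) (h2 k)).trans_lt hk
  exact this.continuousOn (Frequently.of_forall fun k => (continuous_simpleInt (s k)).continuousOn)

lemma isClosed_FAPs : IsClosed (FAPs α) := by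
  unfold FAPs IsFAP
  simp only [ofPred_and, ofPred_forall]
  refine IsClosed.inter (isClosed_eq (by fun_prop) (by fun_prop)) ?_
  refine isClosed_iInter fun A => isClosed_iInter fun B => isClosed_iInter fun _ => ?_
  exact isClosed_eq (by fun_prop) (by fun_prop)

/-- Convex combination. -/
noncomputable def mixF (a b : ℝ) (ha : 0 ≤ a) (hb : 0 ≤ b) (hab : a + b = 1)
    (P Q : MSet α → unitInterval) : MSet α → unitInterval := fun A =>
  ⟨a * P A + b * Q A, by
    have h1 := unitInterval.nonneg (P A)
    have h2 := unitInterval.nonneg (Q A)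
    have h3 := unitInterval.le_one (P A)
    have h4 := unitInterval.le_one (Q A)
    constructor
    · positivity
    · nlinarith⟩

section mix
variable {a b : ℝ} (ha : 0 ≤ a) (hb : 0 ≤ b) (hab : a + b = 1) {P Q : MSet α → unitInterval}

lemma mixF_apply (A : MSet α) : (mixF a b ha hb hab P Q A : ℝ) = a * P A + b * Q A := rfl

lemma mixF_isFAP (hP : IsFAP P) (hQ : IsFAP Q) : IsFAP (mixF a b ha hb hab P Q) := by
  refine ⟨?_, fun A B h => ?_⟩
  · rw [mixF_apply, hP.1, hQ.1]; linarith
  · simp only [mixF_apply]; rw [hP.2 A B h, hQ.2 A B h]; ring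

lemma mixF_simpleInt (s : SimpleFunc α ℝ) :
    simpleInt (mixF a b ha hb hab P Q) s = a * simpleInt P s + b * simpleInt Q s := by
  unfold simpleInt
  rw [Finset.mul_sum, Finset.mul_sum, ← Finset.sum_add_distrib]
  refine Finset.sum_congr rfl fun y _ => ?_
  rw [mixF_apply]; ring

lemma mixF_fapInt (hP : IsFAP P) (hQ : IsFAP Q) {f : α → ℝ} (hf : Measurable f) {M : ℝ}
    (hM : ∀ x, |f x| ≤ M) :
    fapInt (mixF a b ha hb hab P Q) f = a * fapInt P f + b * fapInt Q f := by
  obtain ⟨s, h1, h2⟩ := exists_approx hf hM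
  refine tendsto_nhds_unique (tendsto_approx (mixF_isFAP ha hb hab hP hQ) hM h1 h2) ?_
  simp only [mixF_simpleInt]
  exact ((tendsto_approx hP hM h1 h2).const_mul a).add ((tendsto_approx hQ hM h1 h2).const_mul b)

end mix

/-- `fapIntTop` for an almost surely bounded function. -/
lemma fapIntTop_eq {Q : MSet α → unitInterval} (hQ : IsFAP Q) {c : α → ℝ≥0∞} {K : ℕ}
    {N : Set α} (hN : MeasurableSet N) (hN0 : fval Q N = 0) (hc : ∀ x, x ∉ N → c x ≤ K) :
    fapIntTop Q c = ENNReal.ofReal (fapInt Q fun x => (c x ⊓ (K : ℝ≥0∞)).toReal) := by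
  have bd : ∀ (k m : ℕ), k ≤ m → ∀ x, |(c x ⊓ (k : ℝ≥0∞)).toReal| ≤ m := by
    intro k m hkm x
    rw [abs_of_nonneg ENNReal.toReal_nonneg]
    refine ENNReal.toReal_le_of_le_ofReal (by positivity) (inf_le_right.trans ?_)
    simpa using hkm
  refine le_antisymm (iSup_le fun k => ?_) (le_iSup_of_le K le_rfl)
  refine ENNReal.ofReal_le_ofReal
    (fapInt_ae_le hQ (M := ((max k K : ℕ) : ℝ)) (bd k _ (le_max_left _ _)) (bd K _ (le_max_right _ _)) hN hN0
      fun x hx => ?_)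
  rw [inf_eq_left.2 (hc x hx)]
  exact ENNReal.toReal_mono (ne_top_of_le_ne_top (by simp) (hc x hx)) inf_le_left

/-- FAP attached to a measure -/
noncomputable def ofMeas (P : Measure α) [IsProbabilityMeasure P] : MSet α → unitInterval :=
  fun A => ⟨P.real A.1, measureReal_nonneg, measureReal_le_one⟩

variable (P : Measure α) [IsProbabilityMeasure P]

lemma ofMeas_apply (A : MSet α) : (ofMeas P A : ℝ) = P.real A.1 := rfl

lemma ofMeas_isFAP : IsFAP (ofMeas P) := by
  refine ⟨?_, fun A B h => ?_⟩
  · rw [ofMeas_apply]; simp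
  · simp only [ofMeas_apply]; exact measureReal_union h B.2

lemma ofMeas_simpleInt (s : SimpleFunc α ℝ) : simpleInt (ofMeas P) s = ∫ x, s x ∂P := by
  rw [SimpleFunc.integral_eq_sum _ s.integrable_of_isFiniteMeasure]
  unfold simpleInt
  refine Finset.sum_congr rfl fun y _ => ?_
  rw [ofMeas_apply, smul_eq_mul, mul_comm]

lemma ofMeas_fapInt {f : α → ℝ} (hf : Measurable f) {M : ℝ} (hM : ∀ x, |f x| ≤ M) :
    fapInt (ofMeas P) f = ∫ x, f x ∂P := by
  obtain ⟨s, h1, h2⟩ := exists_approx hf hM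
  refine tendsto_nhds_unique (tendsto_approx (ofMeas_isFAP P) hM h1 h2) ?_
  have hi : Integrable f P := Integrable.of_bound hf.aestronglyMeasurable M (.of_forall hM)
  rw [tendsto_iff_dist_tendsto_zero]
  refine squeeze_zero (fun _ => dist_nonneg) (fun k => ?_) tendsto_one_div_add_atTop_nhds_zero_nat
  have hs := (s k).integrable_of_isFiniteMeasure (μ := P)
  rw [ofMeas_simpleInt, dist_comm, Real.dist_eq, ← integral_sub hi hs]
  have := norm_integral_le_of_norm_le_const (μ := P) (f := fun x => f x - s k x)
    (C := 1 / ((k : ℝ) + 1)) (.of_forall fun x => by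
      rw [Real.norm_eq_abs, abs_le]
      have := h1 k x; have := h2 k x
      have : (0:ℝ) ≤ 1 / ((k : ℝ) + 1) := by positivity
      constructor <;> linarith)
  simpa using this

lemma ofMeas_fapIntTop {c : α → ℝ≥0∞} (hc : Measurable c) :
    fapIntTop (ofMeas P) c = ∫⁻ x, c x ∂P := by
  have h : ∀ k : ℕ, ENNReal.ofReal (fapInt (ofMeas P) fun x => (c x ⊓ (k : ℝ≥0∞)).toReal)
      = ∫⁻ x, c x ⊓ (k : ℝ≥0∞) ∂P := by
    intro k
    have hm : Measurable fun x => c x ⊓ (k : ℝ≥0∞) := hc.min measurable_const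
    have bd : ∀ x, |(c x ⊓ (k : ℝ≥0∞)).toReal| ≤ k := by
      intro x
      rw [abs_of_nonneg ENNReal.toReal_nonneg]
      refine ENNReal.toReal_le_of_le_ofReal (by positivity) (inf_le_right.trans ?_)
      simp
    rw [ofMeas_fapInt P hm.ennreal_toReal bd, ofReal_integral_eq_lintegral_ofReal]
    · refine lintegral_congr fun x => ENNReal.ofReal_toReal ?_
      exact ne_top_of_le_ne_top (by simp) inf_le_right
    · exact Integrable.of_bound hm.ennreal_toReal.aestronglyMeasurable k (.of_forall bd)
    · exact .of_forall fun x => ENNReal.toReal_nonneg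
  unfold fapIntTop
  simp only [h]
  rw [← lintegral_iSup]
  · refine lintegral_congr fun x => ?_
    rw [← inf_iSup_eq, ENNReal.iSup_natCast, inf_top_eq]
  · exact fun k => hc.min measurable_const
  · intro k l hkl x
    have : (k : ℝ≥0∞) ≤ l := by exact_mod_cast hkl
    exact inf_le_inf_left _ this

lemma ofMeas_fapIntR {f : α → ℝ} (hf : Measurable f) (hi : Integrable f P) :
    fapIntR (ofMeas P) f = ∫ x, f x ∂P := by
  unfold fapIntR
  rw [ofMeas_fapIntTop P hf.ennreal_ofReal, ofMeas_fapIntTop P (c := fun x => ENNReal.ofReal (-f x)) hf.neg.ennreal_ofReal,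
    integral_eq_lintegral_pos_part_sub_lintegral_neg_part hi]

lemma integrable_of_fapIntTop {f : α → ℝ} (hf : Measurable f) :
    fapIntTop (ofMeas P) (fun x => ENNReal.ofReal |f x|) < ⊤ ↔ Integrable f P := by
  rw [ofMeas_fapIntTop P (by fun_prop)]
  constructor
  · intro h
    refine ⟨hf.aestronglyMeasurable, ?_⟩
    rw [hasFiniteIntegral_iff_norm]; exact h
  · intro h
    have := h.2
    rw [hasFiniteIntegral_iff_norm] at this; exact this

lemma ofMeas_mart_iff {n : ℕ} (hn : 0 < n) (P : Measure (Fin n → ℝ)) [IsProbabilityMeasure P] :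
    IsMartFAP hn (ofMeas P) ↔ IsMartMeas hn P := by
  unfold IsMartFAP IsMartMeas
  have h1 : (∀ i : Fin n, fapIntTop (ofMeas P) (fun ω => ENNReal.ofReal |ω i|) < ⊤) ↔
      ∀ i : Fin n, Integrable (fun ω => ω i) P :=
    forall_congr' fun i => integrable_of_fapIntTop P (measurable_pi_apply i)
  rw [h1]
  refine and_congr_right fun hi => ?_
  rw [ofMeas_fapIntR P (measurable_pi_apply _) (hi _)]
  refine and_congr_right fun _ => ?_
  refine forall_congr' fun i => forall_congr' fun j => forall_congr' fun _ =>
    forall_congr' fun g => forall_congr' fun hg => forall_congr' fun hb =>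
    forall_congr' fun _ => ?_
  rw [ofMeas_fapIntR P]
  · exact ((measurable_pi_apply j).sub (measurable_pi_apply i)).mul hg
  · obtain ⟨C, hC⟩ := hb
    exact ((hi j).sub (hi i)).mul_bdd (c := C) hg.aestronglyMeasurable (.of_forall hC)

end FAPaux

section FAPtwo

open Filter Topology

variable {α : Type*} [MeasurableSpace α]

noncomputable def trf (K : ℕ) (f : α → ℝ) (x : α) : ℝ := (ENNReal.ofReal (f x) ⊓ (K : ℝ≥0∞)).toReal

lemma trf_meas {K : ℕ} {f : α → ℝ} (hf : Measurable f) : Measurable (trf K f) :=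
  (hf.ennreal_ofReal.min measurable_const).ennreal_toReal

lemma trf_nonneg {K : ℕ} {f : α → ℝ} (x : α) : 0 ≤ trf K f x := ENNReal.toReal_nonneg

lemma trf_bd {K : ℕ} {f : α → ℝ} (x : α) : |trf K f x| ≤ K := by
  rw [abs_of_nonneg (trf_nonneg x)]
  refine ENNReal.toReal_le_of_le_ofReal (by positivity) (inf_le_right.trans ?_)
  simp

lemma fapInt_trf_nonneg {Q : MSet α → unitInterval} (hQ : IsFAP Q) (K : ℕ) (f : α → ℝ) :
    0 ≤ fapInt Q (trf K f) := by
  rw [← simpleInt_const hQ 0]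
  exact le_fapInt hQ (fun x => (abs_le.1 (trf_bd x)).2) fun x => trf_nonneg x

lemma fapIntR_eq {Q : MSet α → unitInterval} (hQ : IsFAP Q) {f : α → ℝ} {K : ℕ}
    {N : Set α} (hN : MeasurableSet N) (hN0 : fval Q N = 0) (hc : ∀ x, x ∉ N → |f x| ≤ K) :
    fapIntR Q f = fapInt Q (trf K f) - fapInt Q (trf K fun x => - f x) := by
  unfold fapIntR
  have e : ((K : ℝ≥0∞)) = ENNReal.ofReal (K : ℝ) := by simp
  rw [fapIntTop_eq hQ (K := K) hN hN0, fapIntTop_eq hQ (K := K) hN hN0]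
  · change (ENNReal.ofReal (fapInt Q (trf K f))).toReal -
      (ENNReal.ofReal (fapInt Q (trf K fun x => - f x))).toReal = _
    rw [ENNReal.toReal_ofReal (fapInt_trf_nonneg hQ K f),
      ENNReal.toReal_ofReal (fapInt_trf_nonneg hQ K fun x => - f x)]
  · intro x hx
    rw [e]
    exact ENNReal.ofReal_le_ofReal ((neg_le_abs _).trans (hc x hx))
  · intro x hx
    rw [e]
    exact ENNReal.ofReal_le_ofReal ((le_abs_self _).trans (hc x hx))

def Uset (Pstar : Measure α) (F : Set (α → ℝ)) : Set (MSet α → unitInterval) :=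
  {Q | IsFAP Q ∧ (∀ A : MSet α, Pstar A.1 = 0 → (Q A : ℝ) = 0) ∧ ∀ f ∈ F, fapIntR Q f = 0}

variable {Pstar : Measure α} {N : Set α} {F : Set (α → ℝ)}

lemma isCompact_Uset (hN : MeasurableSet N) (hN0 : Pstar N = 0)
    (hF : ∀ f ∈ F, Measurable f ∧ ∃ K : ℕ, ∀ x, x ∉ N → |f x| ≤ K) :
    IsCompact (Uset Pstar F) := by
  apply IsClosed.isCompact
  have hV : IsClosed (FAPs α ∩ {Q | ∀ A : MSet α, Pstar A.1 = 0 → (Q A : ℝ) = 0}) := by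
    refine isClosed_FAPs.inter ?_
    simp only [ofPred_forall]
    refine isClosed_iInter fun A => isClosed_iInter fun _ => ?_
    exact isClosed_eq (by fun_prop) (by fun_prop)
  have : Uset Pstar F = (FAPs α ∩ {Q | ∀ A : MSet α, Pstar A.1 = 0 → (Q A : ℝ) = 0}) ∩
      ⋂ f : F, ((FAPs α ∩ {Q | ∀ A : MSet α, Pstar A.1 = 0 → (Q A : ℝ) = 0}) ∩
        {Q | fapIntR Q f.1 = 0}) := by
    ext Q
    simp only [Uset, FAPs, mem_ofPred_eq, mem_inter_iff, mem_iInter]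
    constructor
    · rintro ⟨a, b, c⟩
      exact ⟨⟨a, b⟩, fun f => ⟨⟨a, b⟩, c f.1 f.2⟩⟩
    · rintro ⟨⟨a, b⟩, c⟩
      exact ⟨a, b, fun f hf => (c ⟨f, hf⟩).2⟩
  rw [this]
  refine hV.inter (isClosed_iInter fun f => ?_)
  obtain ⟨hm, K, hK⟩ := hF f.1 f.2
  have hcont : ContinuousOn (fun Q => fapIntR Q f.1)
      (FAPs α ∩ {Q | ∀ A : MSet α, Pstar A.1 = 0 → (Q A : ℝ) = 0}) := by
    have : ContinuousOn (fun Q => fapInt Q (trf K f.1) - fapInt Q (trf K fun x => - f.1 x))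
      (FAPs α ∩ {Q | ∀ A : MSet α, Pstar A.1 = 0 → (Q A : ℝ) = 0}) :=
      ((continuousOn_fapInt (trf_meas hm) trf_bd).sub
        (continuousOn_fapInt (trf_meas hm.neg) trf_bd)).mono inter_subset_left
    refine this.congr ?_
    rintro Q ⟨hQ, hQ'⟩
    exact fapIntR_eq hQ hN ((fval_eq Q hN).trans (hQ' ⟨N, hN⟩ hN0)) hK
  exact hcont.preimage_isClosed_of_isClosed hV isClosed_singleton

lemma mix_mem_Uset (hN : MeasurableSet N) (hN0 : Pstar N = 0)
    (hF : ∀ f ∈ F, Measurable f ∧ ∃ K : ℕ, ∀ x, x ∉ N → |f x| ≤ K)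
    {a b : ℝ} (ha : 0 ≤ a) (hb : 0 ≤ b) (hab : a + b = 1) {P Q : MSet α → unitInterval}
    (hP : P ∈ Uset Pstar F) (hQ : Q ∈ Uset Pstar F) : mixF a b ha hb hab P Q ∈ Uset Pstar F := by
  have h1 := mixF_isFAP ha hb hab hP.1 hQ.1
  have h2 : ∀ A : MSet α, Pstar A.1 = 0 → (mixF a b ha hb hab P Q A : ℝ) = 0 := by
    intro A hA
    rw [mixF_apply, hP.2.1 A hA, hQ.2.1 A hA]; simp
  refine ⟨h1, h2, fun f hf => ?_⟩
  obtain ⟨hm, K, hK⟩ := hF f hf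
  have key : ∀ R : MSet α → unitInterval, IsFAP R →
      (∀ A : MSet α, Pstar A.1 = 0 → (R A : ℝ) = 0) → fapIntR R f =
      fapInt R (trf K f) - fapInt R (trf K fun x => - f x) := fun R hR hR' =>
    fapIntR_eq hR hN ((fval_eq R hN).trans (hR' ⟨N, hN⟩ hN0)) hK
  have eP := hP.2.2 f hf
  have eQ := hQ.2.2 f hf
  rw [key _ hP.1 hP.2.1] at eP
  rw [key _ hQ.1 hQ.2.1] at eQ
  rw [key _ h1 h2, mixF_fapInt ha hb hab hP.1 hQ.1 (trf_meas hm) trf_bd,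
    mixF_fapInt ha hb hab hP.1 hQ.1 (trf_meas (f := fun x => - f x) hm.neg) trf_bd]
  linear_combination a * eP + b * eQ

lemma fapInt_sum_ind {Q : MSet α → unitInterval} (hQ : IsFAP Q) {ι : Type*} (T : Finset ι)
    (c : ι → ℝ) (A : ι → Set α) (hA : ∀ t, MeasurableSet (A t)) :
    fapInt Q (fun x => ∑ t ∈ T, (A t).indicator (fun _ => c t) x) = ∑ t ∈ T, fval Q (A t) * c t := by
  classical
  have : ∃ s : SimpleFunc α ℝ, (⇑s = fun x => ∑ t ∈ T, (A t).indicator (fun _ => c t) x) ∧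
      simpleInt Q s = ∑ t ∈ T, fval Q (A t) * c t := by
    induction T using Finset.induction_on with
    | empty => exact ⟨SimpleFunc.const α 0, by ext; simp, by rw [simpleInt_const hQ]; simp⟩
    | insert t T ht ih =>
      obtain ⟨s, h1, h2⟩ := ih
      refine ⟨SimpleFunc.piecewise (A t) (hA t) (SimpleFunc.const α (c t)) (SimpleFunc.const α 0)
        + s, ?_, ?_⟩
      · ext x
        rw [Finset.sum_insert ht, SimpleFunc.coe_add, Pi.add_apply, h1]
        by_cases hx : x ∈ A t <;> simp [hx]
      · rw [simpleInt_add hQ, simpleInt_indicator hQ, h2, Finset.sum_insert ht]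
  obtain ⟨s, h1, h2⟩ := this
  rw [← h1, fapInt_simple hQ, h2]

lemma fval_biUnion_le {Q : MSet α → unitInterval} (hQ : IsFAP Q) {ι : Type*} (T : Finset ι)
    (A : ι → Set α) (hA : ∀ t, MeasurableSet (A t)) :
    fval Q (⋃ t ∈ T, A t) ≤ ∑ t ∈ T, fval Q (A t) := by
  classical
  induction T using Finset.induction_on with
  | empty => simp [fval_empty hQ]
  | insert t T ht ih =>
    rw [Finset.set_biUnion_insert, Finset.sum_insert ht]
    exact (fval_union_le hQ (hA t) (T.measurableSet_biUnion fun i _ => hA i)).trans (by gcongr)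

/-- existence of an element with given marginals -/
lemma exists_marginals {n : ℕ} (μ : Fin n → Measure ℝ) [∀ i, IsProbabilityMeasure (μ i)]
    {Pstar : Measure (Fin n → ℝ)} {N : Set (Fin n → ℝ)} {F : Set ((Fin n → ℝ) → ℝ)}
    (hN : MeasurableSet N) (hN0 : Pstar N = 0)
    (hF : ∀ f ∈ F, Measurable f ∧ ∃ K : ℕ, ∀ x, x ∉ N → |f x| ≤ K)
    (hD : DualCond μ (Uset Pstar F)) :
    ∃ Q ∈ Uset Pstar F, ∀ (i : Fin n) (B : Set ℝ), MeasurableSet B →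
      fval Q ((fun ω => ω i) ⁻¹' B) = (μ i).real B := by
  classical
  have hU := isCompact_Uset hN hN0 hF
  have hmeas : ∀ t : Fin n × MSet ℝ, MeasurableSet ((fun ω : Fin n → ℝ => ω t.1) ⁻¹' t.2.1) :=
    fun t => measurable_pi_apply t.1 t.2.2
  have hcont : ∀ t : Fin n × MSet ℝ, Continuous fun Q : MSet (Fin n → ℝ) → unitInterval =>
      fval Q ((fun ω => ω t.1) ⁻¹' t.2.1) := by
    intro t
    simp only [fval_eq _ (hmeas t)]
    fun_prop
  have key := hU.inter_iInter_nonempty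
    (fun t : Fin n × MSet ℝ => {Q | fval Q ((fun ω => ω t.1) ⁻¹' t.2.1) = (μ t.1).real t.2.1})
    (fun t => isClosed_eq (hcont t) continuous_const) ?_
  · obtain ⟨Q, hQ, hQ'⟩ := key
    refine ⟨Q, hQ, fun i B hB => ?_⟩
    exact (mem_iInter.1 hQ' (i, ⟨B, hB⟩))
  intro T
  let Φ : (MSet (Fin n → ℝ) → unitInterval) → (T → ℝ) := fun Q t =>
    fval Q ((fun ω => ω t.1.1) ⁻¹' t.1.2.1)
  have hΦ : Continuous Φ := continuous_pi fun t => hcont t.1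
  have hK : IsCompact (Φ '' Uset Pstar F) := hU.image hΦ
  have hconv : Convex ℝ (Φ '' Uset Pstar F) := by
    rintro _ ⟨P, hP, rfl⟩ _ ⟨Q, hQ, rfl⟩ a b ha hb hab
    refine ⟨mixF a b ha hb hab P Q, mix_mem_Uset hN hN0 hF ha hb hab hP hQ, ?_⟩
    ext t
    simp only [Φ, Pi.add_apply, Pi.smul_apply, smul_eq_mul, fval_eq _ (hmeas t.1), mixF_apply]
  by_cases hx : (fun t : T => (μ t.1.1).real t.1.2.1) ∈ Φ '' Uset Pstar F
  · obtain ⟨Q, hQ, hQ'⟩ := hx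
    refine ⟨Q, hQ, ?_⟩
    simp only [mem_iInter]
    intro t ht
    exact congrFun hQ' ⟨t, ht⟩
  exfalso
  obtain ⟨φ, u, h1, h2⟩ := geometric_hahn_banach_point_closed hconv hK.isClosed hx
  let c : T → ℝ := fun i => φ fun j => if i = j then 1 else 0
  have hφ : ∀ y : T → ℝ, φ y = ∑ t, y t * c t := fun y =>
    LinearMap.pi_apply_eq_sum_univ (φ : (T → ℝ) →ₗ[ℝ] ℝ) y
  let f : Fin n → ℝ → ℝ := fun i x =>
    ∑ t : T, if t.1.1 = i then (t.1.2.1).indicator (fun _ => c t) x else 0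
  have hfm : ∀ i, Measurable (f i) := by
    intro i
    refine Finset.measurable_sum _ fun t _ => ?_
    split_ifs
    · exact measurable_const.indicator t.1.2.2
    · exact measurable_const
  have hfb : ∀ i, ∃ C, ∀ x, |f i x| ≤ C := by
    intro i
    refine ⟨∑ t : T, |c t|, fun x => (Finset.abs_sum_le_sum_abs _ _).trans ?_⟩
    refine Finset.sum_le_sum fun t _ => ?_
    split_ifs
    · by_cases hx : x ∈ t.1.2.1 <;> simp [hx]
    · simp
  have hsum : ∀ ω : Fin n → ℝ, ∑ i, f i (ω i) =
      ∑ t : T, ((fun ω : Fin n → ℝ => ω t.1.1) ⁻¹' t.1.2.1).indicator (fun _ => c t) ω := by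
    intro ω
    simp only [f]
    rw [Finset.sum_comm]
    refine Finset.sum_congr rfl fun t _ => ?_
    rw [Finset.sum_ite_eq]
    simp [indicator]
  have hint : ∑ i, ∫ x, f i x ∂(μ i) = φ fun t : T => (μ t.1.1).real t.1.2.1 := by
    rw [hφ]
    have : ∀ i, ∫ x, f i x ∂(μ i) = ∑ t : T, if t.1.1 = i then (μ i).real t.1.2.1 * c t else 0 := by
      intro i
      simp only [f]
      rw [integral_finsetSum]
      · refine Finset.sum_congr rfl fun t _ => ?_
        split_ifs
        · rw [integral_indicator_const _ t.1.2.2, smul_eq_mul]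
        · simp
      · intro t _
        split_ifs
        · exact (integrable_const _).indicator t.1.2.2
        · exact integrable_zero _ _ _
    simp only [this]
    rw [Finset.sum_comm]
    refine Finset.sum_congr rfl fun t _ => ?_
    rw [Finset.sum_ite_eq]
    simp
  have := hD f hfm hfb
  rw [hint] at this
  have hle : (u : EReal) ≤ ⨅ Q ∈ Uset Pstar F,
      ((fapInt Q (fun ω => ∑ i, f i (ω i)) : ℝ) : EReal) := by
    refine le_iInf₂ fun Q hQ => ?_
    rw [EReal.coe_le_coe_iff]
    simp only [hsum]
    rw [fapInt_sum_ind hQ.1 Finset.univ c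
      (fun t : T => (fun ω : Fin n → ℝ => ω t.1.1) ⁻¹' t.1.2.1) (fun t => hmeas t.1)]
    have := (h2 _ ⟨Q, hQ, rfl⟩).le
    rwa [hφ] at this
  have := EReal.coe_le_coe_iff.1 (hle.trans this)
  linarith

/-- continuity at the empty set gives a measure -/
lemma exists_measure {Q : MSet α → unitInterval} (hQ : IsFAP Q)
    (hc : ∀ s : ℕ → Set α, (∀ k, MeasurableSet (s k)) → Antitone s → (⋂ k, s k) = ∅ →
      Tendsto (fun k => fval Q (s k)) atTop (𝓝 0)) :
    ∃ (P : Measure α) (_ : IsProbabilityMeasure P), ofMeas P = Q := by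
  have hring : IsSetRing {A : Set α | MeasurableSet A} :=
    ⟨MeasurableSet.empty, fun _ _ h1 h2 => MeasurableSet.union h1 h2,
      fun _ _ h1 h2 => MeasurableSet.diff h1 h2⟩
  let m : AddContent ℝ≥0∞ {A : Set α | MeasurableSet A} :=
    hring.addContent_of_union (fun A => ENNReal.ofReal (fval Q A)) (by simp [fval_empty hQ])
      (fun {A B} hA hB h => by
        rw [fval_union hQ hA hB h, ENNReal.ofReal_add (fval_nonneg _ _) (fval_nonneg _ _)])
  have hm : ∀ A, m A = ENNReal.ofReal (fval Q A) := fun A => rfl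
  have hadd := addContent_iUnion_eq_sum_of_tendsto_zero hring m (by simp [hm]) (by
    intro s hs ha he
    simp only [hm]
    have := ENNReal.tendsto_ofReal (hc s hs ha he)
    simpa using this)
  let P : Measure α := Measure.ofMeasurable (fun A _ => m A) (by simp)
    (fun f hf hd => hadd hf (MeasurableSet.iUnion hf) hd)
  have hP : ∀ A, MeasurableSet A → P A = ENNReal.ofReal (fval Q A) := fun A hA =>
    Measure.ofMeasurable_apply A hA
  have hprob : IsProbabilityMeasure P := ⟨by rw [hP _ .univ, fval_univ hQ]; simp⟩
  refine ⟨P, hprob, ?_⟩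
  ext A
  rw [ofMeas_apply, measureReal_def, hP _ A.2, ENNReal.toReal_ofReal (fval_nonneg _ _),
    fval_eq Q A.2]

lemma exists_finite_approx (ν : Measure ℝ) [IsProbabilityMeasure ν] {S : Set ℝ} (hS : S.Countable)
    (h : ν Sᶜ = 0) {ε : ℝ} (hε : 0 < ε) : ∃ G : Set ℝ, G.Finite ∧ ν.real Gᶜ < ε := by
  have hne : S.Nonempty := by
    rw [nonempty_iff_ne_empty]; rintro rfl; simp at h
  obtain ⟨v, rfl⟩ := hS.exists_eq_range hne
  let G : ℕ → Set ℝ := fun k => v '' Iic k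
  have hG : ∀ k, (G k).Finite := fun k => (finite_Iic k).image v
  have ht : Tendsto (fun k => ν (G k)ᶜ) atTop (𝓝 (ν (⋂ k, (G k)ᶜ))) := by
    refine tendsto_measure_iInter_atTop (fun k => (hG k).measurableSet.compl.nullMeasurableSet) ?_
      ⟨0, measure_ne_top _ _⟩
    intro k l hkl
    exact compl_subset_compl.2 (image_mono (Iic_subset_Iic.2 hkl))
  have h0 : ν (⋂ k, (G k)ᶜ) = 0 := by
    refine measure_mono_null ?_ h
    rw [← compl_iUnion, compl_subset_compl]
    rintro _ ⟨k, rfl⟩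
    exact mem_iUnion.2 ⟨k, k, self_mem_Iic, rfl⟩
  rw [h0] at ht
  have ht' := (ENNReal.tendsto_toReal ENNReal.zero_ne_top).comp ht
  obtain ⟨k, hk⟩ := (ht'.eventually (gt_mem_nhds (by simpa using hε))).exists
  exact ⟨G k, hG k, hk⟩

lemma sigma_additive {n : ℕ} (μ : Fin n → Measure ℝ) [∀ i, IsProbabilityMeasure (μ i)]
    {Q : MSet (Fin n → ℝ) → unitInterval} (hQ : IsFAP Q)
    (hmar : ∀ (i : Fin n) (B : Set ℝ), MeasurableSet B →
      fval Q ((fun ω => ω i) ⁻¹' B) = (μ i).real B) (i₀ : Fin n)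
    (hd : ∀ i, i ≠ i₀ → ∃ S : Set ℝ, S.Countable ∧ μ i Sᶜ = 0) :
    ∃ (P : Measure (Fin n → ℝ)) (_ : IsProbabilityMeasure P), ofMeas P = Q := by
  classical
  refine exists_measure hQ fun A hA hanti hemp => ?_
  rw [Metric.tendsto_atTop]
  intro ε hε
  have hn : (0:ℝ) < n := by exact_mod_cast i₀.pos
  have hG : ∀ i, ∃ G : Set ℝ, (i ≠ i₀ → G.Finite) ∧ MeasurableSet G ∧
      (μ i).real Gᶜ < ε / 2 / n := by
    intro i
    by_cases hi : i = i₀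
    · exact ⟨univ, fun h => (h hi).elim, .univ, by simp; positivity⟩
    · obtain ⟨S, hS, hS'⟩ := hd i hi
      obtain ⟨G, h1, h2⟩ := exists_finite_approx (μ i) hS hS' (ε := ε / 2 / n) (by positivity)
      exact ⟨G, fun _ => h1, h1.measurableSet, h2⟩
  choose G hGf hGm hGs using hG
  have hXf : (Set.pi univ fun i => if i = i₀ then ({0} : Set ℝ) else G i).Finite := by
    refine Set.Finite.pi fun i => ?_
    split_ifs with hi
    · exact finite_singleton _
    · exact hGf i hi
  let X := hXf.toFinset
  let sec : ℕ → (Fin n → ℝ) → Set ℝ := fun k x => (fun y => Function.update x i₀ y) ⁻¹' A k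
  have hsec : ∀ k x, MeasurableSet (sec k x) := fun k x => (measurable_update x) (hA k)
  have ht : Tendsto (fun k => ∑ x ∈ X, (μ i₀).real (sec k x)) atTop (𝓝 0) := by
    rw [← Finset.sum_const_zero (s := X)]
    refine tendsto_finsetSum _ fun x _ => ?_
    have h1 : Tendsto (fun k => μ i₀ (sec k x)) atTop (𝓝 (μ i₀ (⋂ k, sec k x))) :=
      tendsto_measure_iInter_atTop (fun k => (hsec k x).nullMeasurableSet)
        (fun k l hkl => preimage_mono (hanti hkl)) ⟨0, measure_ne_top _ _⟩
    have h2 : (⋂ k, sec k x) = ∅ := by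
      simp only [sec]
      rw [← preimage_iInter, hemp, preimage_empty]
    rw [h2, measure_empty] at h1
    have h3 := (ENNReal.tendsto_toReal ENNReal.zero_ne_top).comp h1
    rw [ENNReal.toReal_zero] at h3
    exact h3
  obtain ⟨k0, hk0⟩ := (ht.eventually (gt_mem_nhds (half_pos hε))).exists_forall_of_atTop
  refine ⟨k0, fun k hk => ?_⟩
  rw [Real.dist_eq, sub_zero, abs_of_nonneg (fval_nonneg _ _)]
  have hsub : A k ⊆ (⋃ i ∈ (Finset.univ : Finset (Fin n)), (fun ω : Fin n → ℝ => ω i) ⁻¹' (G i)ᶜ) ∪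
      ⋃ x ∈ X, (fun ω : Fin n → ℝ => ω i₀) ⁻¹' sec k x := by
    intro ω hω
    by_cases h : ∀ i, ω i ∈ G i
    · right
      simp only [mem_iUnion]
      refine ⟨Function.update ω i₀ 0, ?_, ?_⟩
      · rw [Set.Finite.mem_toFinset]
        intro i _
        by_cases hi : i = i₀
        · subst hi; simp
        · simp [hi, h i]
      · simpa [sec] using hω
    · left
      push Not at h
      obtain ⟨i, hi⟩ := h
      simp only [mem_iUnion]
      exact ⟨i, Finset.mem_univ _, hi⟩
  have m1 : ∀ i, MeasurableSet ((fun ω : Fin n → ℝ => ω i) ⁻¹' (G i)ᶜ) := fun i =>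
    measurable_pi_apply i (hGm i).compl
  have m2 : ∀ x, MeasurableSet ((fun ω : Fin n → ℝ => ω i₀) ⁻¹' sec k x) := fun x =>
    measurable_pi_apply i₀ (hsec k x)
  have M1 := Finset.univ.measurableSet_biUnion fun i _ => m1 i
  have M2 := X.measurableSet_biUnion fun x _ => m2 x
  have b1 := fval_biUnion_le hQ Finset.univ _ m1
  have b2 := fval_biUnion_le hQ X _ m2
  simp only [hmar _ _ (hsec k _)] at b2
  simp only [fun i => hmar i _ (hGm i).compl] at b1
  have b3 : ∑ i, (μ i).real (G i)ᶜ ≤ ∑ i : Fin n, ε / 2 / n :=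
    Finset.sum_le_sum fun i _ => (hGs i).le
  have b4 : ∑ i : Fin n, ε / 2 / n = ε / 2 := by
    simp; field_simp
  have b5 := hk0 k hk
  calc fval Q (A k) ≤ _ := fval_mono hQ (hA k) (M1.union M2) hsub
    _ ≤ _ := fval_union_le hQ M1 M2
    _ < ε := by linarith

/-- martingale test functions -/
def martF {n : ℕ} (hn : 0 < n) : Set ((Fin n → ℝ) → ℝ) :=
  {f | f = (fun ω => ω ⟨0, hn⟩) ∨ ∃ i j : Fin n, (j : ℕ) = (i : ℕ) + 1 ∧
    ∃ g : (Fin n → ℝ) → ℝ, Measurable g ∧ (∃ C, ∀ x, |g x| ≤ C) ∧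
      (∀ x y : Fin n → ℝ, (∀ k : Fin n, k ≤ i → x k = y k) → g x = g y) ∧
      f = fun ω => (ω j - ω i) * g ω}

lemma Uset_eq {n : ℕ} (hn : 0 < n) {Pstar : Measure (Fin n → ℝ)} {N : Set (Fin n → ℝ)}
    (hN : MeasurableSet N) (hN0 : Pstar N = 0) {C : ℕ} (hC : ∀ x, x ∉ N → ∀ i, |x i| ≤ C) :
    {Q | IsFAP Q ∧ (∀ A : MSet (Fin n → ℝ), Pstar A.1 = 0 → (Q A : ℝ) = 0) ∧ IsMartFAP hn Q}
      = Uset Pstar (martF hn) := by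
  ext Q
  simp only [Uset, mem_ofPred_eq]
  refine and_congr_right fun hQ => and_congr_right fun hac => ?_
  constructor
  · rintro ⟨-, h1, h2⟩ f (rfl | ⟨i, j, hij, g, hg, hb, hd, rfl⟩)
    · exact h1
    · exact h2 i j hij g hg hb hd
  · intro h
    refine ⟨fun i => ?_, h _ (Or.inl rfl), fun i j hij g hg hb hd =>
      h _ (Or.inr ⟨i, j, hij, g, hg, hb, hd, rfl⟩)⟩
    rw [fapIntTop_eq hQ (K := C) hN ((fval_eq Q hN).trans (hac ⟨N, hN⟩ hN0))]
    · exact ENNReal.ofReal_lt_top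
    · intro x hx
      have := ENNReal.ofReal_le_ofReal (hC x hx i)
      simpa using this

lemma martF_bd {n : ℕ} (hn : 0 < n) {N : Set (Fin n → ℝ)} {C : ℕ}
    (hC : ∀ x, x ∉ N → ∀ i, |x i| ≤ C) :
    ∀ f ∈ martF hn, Measurable f ∧ ∃ K : ℕ, ∀ x, x ∉ N → |f x| ≤ K := by
  rintro f (rfl | ⟨i, j, hij, g, hg, ⟨D, hD⟩, hd, rfl⟩)
  · exact ⟨measurable_pi_apply _, C, fun x hx => hC x hx _⟩
  · refine ⟨((measurable_pi_apply j).sub (measurable_pi_apply i)).mul hg, ?_⟩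
    obtain ⟨K, hK⟩ := exists_nat_ge ((C + C) * D : ℝ)
    refine ⟨K, fun x hx => le_trans ?_ hK⟩
    rw [abs_mul]
    gcongr
    · exact (abs_sub _ _).trans (add_le_add (hC x hx j) (hC x hx i))
    · exact hD x

end FAPtwo

/-- on `Ω = ℝⁿ`, let `P*` be a σ-additive probability measure with
compact support whose marginals are all discrete except possibly one, and let
`𝒰 = {Q ∈ ℙ : Q ≪ P* and (π_1,…,π_n) is a Q-martingale}`. Then
`Σᵢ μᵢ(fᵢ) ≥ inf_{Q ∈ 𝒰} Q(⊕ᵢ fᵢ)` for all bounded Borel `fᵢ` (with `inf ∅ = ∞`)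
iff there is a σ-additive probability measure `P` with marginals `μ_1,…,μ_n`,
`P ≪ P*`, and `(π_1,…,π_n)` a `P`-martingale. -/
theorem dualCond_iff_exists_sigma_additive_martingale
    {n : ℕ} (hn : 0 < n) (μ : Fin n → Measure ℝ) [∀ i, IsProbabilityMeasure (μ i)]
    (Pstar : MeasureTheory.Measure (Fin n → ℝ)) [IsProbabilityMeasure Pstar]
    (hdisc : ∃ i₀ : Fin n, ∀ i : Fin n, i ≠ i₀ →
      ∃ S : Set ℝ, S.Countable ∧ Pstar.map (fun ω => ω i) S = 1)
    (hcomp : ∃ A : Set (Fin n → ℝ), IsCompact A ∧ Pstar A = 1) :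
    DualCond μ {Q | IsFAP Q ∧
        (∀ A : MSet (Fin n → ℝ), Pstar A.1 = 0 → (Q A : ℝ) = 0) ∧ IsMartFAP hn Q} ↔
      ∃ P : MeasureTheory.Measure (Fin n → ℝ), IsProbabilityMeasure P ∧
        (∀ i : Fin n, P.map (fun ω => ω i) = μ i) ∧ P ≪ Pstar ∧ IsMartMeas hn P := by
  obtain ⟨A, hAc, hA1⟩ := hcomp
  obtain ⟨i₀, hdisc⟩ := hdisc
  have hN : MeasurableSet Aᶜ := hAc.measurableSet.compl
  have hN0 : Pstar Aᶜ = 0 := (prob_compl_eq_zero_iff hAc.measurableSet).2 hA1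
  obtain ⟨C, hC⟩ : ∃ C : ℕ, ∀ x, x ∉ Aᶜ → ∀ i, |x i| ≤ C := by
    obtain ⟨R, hR⟩ := hAc.isBounded.exists_norm_le
    obtain ⟨C, hC⟩ := exists_nat_ge R
    exact ⟨C, fun x hx i => (norm_le_pi_norm x i).trans ((hR x (not_not.1 hx)).trans hC)⟩
  constructor
  · intro hD
    rw [Uset_eq hn hN hN0 hC] at hD
    obtain ⟨Q, hQ, hmar⟩ := exists_marginals μ hN hN0 (martF_bd hn hC) hD
    obtain ⟨P, hP, rfl⟩ := sigma_additive μ hQ.1 hmar i₀ (by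
      intro i hi
      obtain ⟨S, hS, hS1⟩ := hdisc i hi
      refine ⟨S, hS, ?_⟩
      have hSm := hS.measurableSet
      have hm : MeasurableSet ((fun ω : Fin n → ℝ => ω i) ⁻¹' Sᶜ) :=
        measurable_pi_apply i hSm.compl
      rw [Measure.map_apply (measurable_pi_apply i) hSm] at hS1
      have h0 : Pstar ((fun ω : Fin n → ℝ => ω i) ⁻¹' Sᶜ) = 0 := by
        rw [preimage_compl]
        exact (prob_compl_eq_zero_iff (measurable_pi_apply i hSm)).2 hS1
      have h1 := hQ.2.1 ⟨_, hm⟩ h0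
      rw [← fval_eq Q hm, hmar i _ hSm.compl] at h1
      exact (measureReal_eq_zero_iff).1 h1)
    rw [← Uset_eq hn hN hN0 hC] at hQ
    refine ⟨P, hP, fun i => ?_, ?_, (ofMeas_mart_iff hn P).1 hQ.2.2⟩
    · ext B hB
      have h1 := hmar i B hB
      rw [fval_eq _ (measurable_pi_apply i hB), ofMeas_apply] at h1
      rw [Measure.map_apply (measurable_pi_apply i) hB]
      exact (measureReal_eq_measureReal_iff).1 h1
    · refine Measure.AbsolutelyContinuous.mk fun B hB h0 => ?_
      have := hQ.2.1 ⟨B, hB⟩ h0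
      rw [ofMeas_apply] at this
      exact (measureReal_eq_zero_iff).1 this
  · rintro ⟨P, hP, hmar, hac, hmart⟩ f hf hb
    refine iInf₂_le_of_le (ofMeas P) ⟨ofMeas_isFAP P, ?_, (ofMeas_mart_iff hn P).2 hmart⟩ ?_
    · intro B hB
      rw [ofMeas_apply, measureReal_eq_zero_iff]
      exact hac hB
    · rw [EReal.coe_le_coe_iff]
      choose D hD using hb
      have hfm : ∀ i, Measurable fun ω : Fin n → ℝ => f i (ω i) := fun i =>
        (hf i).comp (measurable_pi_apply i)
      rw [ofMeas_fapInt P (M := ∑ i, D i) (Finset.measurable_sum _ fun i _ => hfm i)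
        (fun x => (Finset.abs_sum_le_sum_abs _ _).trans (Finset.sum_le_sum fun i _ => hD i _)),
        integral_finsetSum]
      · refine (Finset.sum_congr rfl fun i _ => ?_).le
        rw [← hmar i, integral_map (measurable_pi_apply i).aemeasurable
          (hf i).aestronglyMeasurable]
      · intro i _
        exact Integrable.of_bound (hfm i).aestronglyMeasurable (D i) (.of_forall fun x => hD i _)

end FATransport
end

section
/- Define c : [0,1]² → [0,∞] by c(x,y) = ∞ if x < y, c(x,y) = 1 if x = y, and c(x,y) = 0 if x > y. If f_1 and f_2 are Lebesgue-integrable functions on [0,1] with f_1(x) + f_2(y) ≤ c(x,y) for all (x,y) ∈ [0,1]², then m(f_1) + m(f_2) ≤ 0; on the other hand, inf_{Q ∈ Γ} Q(c) = 1, so there is a duality gap over σ-additive couplings. In contrast, inf_{Q ∈ M} Q(c) = 0, attained by any finitely additive P ∈ M with P(π_1 > π_2) = 1, and duality holds over M. -/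
open MeasureTheory Set ENNReal

namespace FATransport

variable {α : Type*} [MeasurableSpace α]

/-- Lebesgue measure `m` on `ℬ([0,1])`. -/
noncomputable def mI : Measure unitInterval := volume

/-- The diagonal coupling `T ∈ Γ`, i.e. the image of `m` under `x ↦ (x,x)`. -/
noncomputable def TI : Measure (unitInterval × unitInterval) :=
  mI.map (fun x => (x, x))

/-- `P` has both marginals equal to Lebesgue measure `m` on `[0,1]`. -/
def HasLebesgueMarginals (P : MSet (unitInterval × unitInterval) → unitInterval) : Prop :=
  (∀ (B : Set unitInterval) (hB : MeasurableSet B),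
    (P ⟨Prod.fst ⁻¹' B, measurable_fst hB⟩ : ℝ) = (mI B).toReal) ∧
  (∀ (B : Set unitInterval) (hB : MeasurableSet B),
    (P ⟨Prod.snd ⁻¹' B, measurable_snd hB⟩ : ℝ) = (mI B).toReal)

/-- The set `{(x,y) ∈ [0,1]² : x > y}`. -/
def Sgt : Set (unitInterval × unitInterval) := {p | (p.2 : ℝ) < (p.1 : ℝ)}

/-- The set `{(x,y) ∈ [0,1]² : x < y}`. -/
def Slt : Set (unitInterval × unitInterval) := {p | (p.1 : ℝ) < (p.2 : ℝ)}

/-- The set `{(x,y) ∈ [0,1]² : x ≤ y}`. -/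
def Sle : Set (unitInterval × unitInterval) := {p | (p.1 : ℝ) ≤ (p.2 : ℝ)}

/-- The diagonal `{(x,y) ∈ [0,1]² : x = y}`. -/
def Sdiag : Set (unitInterval × unitInterval) := {p | (p.1 : ℝ) = (p.2 : ℝ)}

lemma measSgt : MeasurableSet Sgt :=
  measurableSet_lt (measurable_subtype_coe.comp measurable_snd)
    (measurable_subtype_coe.comp measurable_fst)

lemma measSlt : MeasurableSet Slt :=
  measurableSet_lt (measurable_subtype_coe.comp measurable_fst)
    (measurable_subtype_coe.comp measurable_snd)

lemma measSle : MeasurableSet Sle :=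
  measurableSet_le (measurable_subtype_coe.comp measurable_fst)
    (measurable_subtype_coe.comp measurable_snd)

lemma measSdiag : MeasurableSet Sdiag :=
  measurableSet_eq_fun (measurable_subtype_coe.comp measurable_fst)
    (measurable_subtype_coe.comp measurable_snd)

end FATransport

namespace FATransport

/-- The cost `c(x,y) = ∞` if `x < y`, `= 1` if `x = y`, `= 0` if `x > y`. -/
noncomputable def cEx (p : unitInterval × unitInterval) : ℝ≥0∞ :=
  if (p.1 : ℝ) < (p.2 : ℝ) then ⊤ else if (p.1 : ℝ) = (p.2 : ℝ) then 1 else 0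

open Filter Topology


instance : IsProbabilityMeasure mI := by unfold mI; infer_instance

lemma proj_mp : MeasurePreserving (projIcc (0:ℝ) 1 zero_le_one) (volume.restrict (Icc (0:ℝ) 1)) mI := by
  have hm : Measurable (projIcc (0:ℝ) 1 zero_le_one) := continuous_projIcc.measurable
  refine ⟨hm, ?_⟩
  have h := unitInterval.measurePreserving_coe.map_eq
  have h2 : (volume.restrict (Icc (0:ℝ) 1)) = Measure.map ((↑) : unitInterval → ℝ) volume := h.symm
  rw [h2, Measure.map_map hm measurable_subtype_coe]
  have : (projIcc (0:ℝ) 1 zero_le_one) ∘ ((↑) : unitInterval → ℝ) = id := by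
    funext x; exact projIcc_val _ x
  rw [this, Measure.map_id]; rfl

/-- rotation -/
noncomputable def rot (ε : ℝ) (x : unitInterval) : unitInterval :=
  projIcc (0:ℝ) 1 zero_le_one
    ((AddCircle.equivIoc (1:ℝ) 0 (((x : ℝ) : AddCircle (1:ℝ)) + ((-ε : ℝ) : AddCircle (1:ℝ)))) : ℝ)

lemma rot_mp (ε : ℝ) : MeasurePreserving (rot ε) mI mI := by
  have h1 : MeasurePreserving (fun x : unitInterval => ((x : ℝ) : AddCircle (1:ℝ))) mI volume := by
    have a := AddCircle.measurePreserving_mk (1:ℝ) 0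
    rw [zero_add, ← Measure.restrict_congr_set Ioc_ae_eq_Icc.symm] at a
    exact a.comp unitInterval.measurePreserving_coe
  have h2 := (measurePreserving_add_right (volume : Measure (AddCircle (1:ℝ)))
    ((-ε : ℝ) : AddCircle (1:ℝ))).comp h1
  have h3 : MeasurePreserving (fun z : AddCircle (1:ℝ) => ((AddCircle.equivIoc (1:ℝ) 0 z : ℝ)))
      volume (volume.restrict (Icc (0:ℝ) 1)) := by
    have a := (measurePreserving_subtype_coe (μa := (volume : Measure ℝ))
      (measurableSet_Ioc (a := (0:ℝ)) (b := 0+1))).comp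
      (AddCircle.measurePreserving_equivIoc (1:ℝ) (a := 0))
    have e : (volume : Measure ℝ).restrict (Ioc (0:ℝ) (0+1)) = volume.restrict (Icc (0:ℝ) 1) := by
      rw [zero_add]; exact Measure.restrict_congr_set Ioc_ae_eq_Icc
    exact ⟨a.measurable, a.map_eq.trans e⟩
  exact proj_mp.comp (h3.comp h2)

lemma rot_lt (ε : ℝ) (hε : 0 < ε) (x : unitInterval) (hx : ε < x) : (rot ε x : ℝ) < x := by
  have hx1 := x.2.2
  have hm : (x:ℝ) - ε ∈ Ioc (0:ℝ) (0 + 1) := ⟨by linarith, by linarith⟩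
  have e : ((x : ℝ) : AddCircle (1:ℝ)) + ((-ε : ℝ) : AddCircle (1:ℝ))
      = (((x:ℝ) - ε : ℝ) : AddCircle (1:ℝ)) := by
    rw [sub_eq_add_neg]; rfl
  unfold rot
  rw [e, AddCircle.equivIoc_coe_of_mem hm, projIcc_of_mem (zero_le_one) ⟨hm.1.le, by linarith [hm.2]⟩]
  simpa using hε

lemma partA (f₁ f₂ : unitInterval → ℝ) (h₁ : Integrable f₁ mI) (h₂ : Integrable f₂ mI)
    (h : ∀ x y : unitInterval, cEx (x, y) ≠ ⊤ → f₁ x + f₂ y ≤ (cEx (x, y)).toReal) :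
    (∫ x, f₁ x ∂mI) + (∫ y, f₂ y ∂mI) ≤ 0 := by
  set F₁ : ℝ → ℝ := f₁ ∘ projIcc (0:ℝ) 1 zero_le_one with hF₁
  set F₂ : ℝ → ℝ := f₂ ∘ projIcc (0:ℝ) 1 zero_le_one with hF₂
  have key : ∀ f : unitInterval → ℝ, Integrable f mI →
      IntervalIntegrable (f ∘ projIcc (0:ℝ) 1 zero_le_one) volume 0 1 ∧
      ∫ x, f x ∂mI = ∫ x in (0:ℝ)..1, (f ∘ projIcc (0:ℝ) 1 zero_le_one) x := by
    intro f hf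
    constructor
    · rw [intervalIntegrable_iff_integrableOn_Icc_of_le zero_le_one]
      exact proj_mp.integrable_comp_of_integrable hf
    · rw [intervalIntegral.integral_of_le zero_le_one, ← integral_Icc_eq_integral_Ioc]
      have := proj_mp.map_eq
      conv_lhs => rw [← this]
      rw [integral_map proj_mp.measurable.aemeasurable]
      · rfl
      · rw [this]; exact hf.1
  obtain ⟨i₁, e₁⟩ := key f₁ h₁
  obtain ⟨i₂, e₂⟩ := key f₂ h₂
  rw [e₁, e₂]
  have c₁ : ContinuousOn (fun b => ∫ x in (1:ℝ)..b, F₁ x) (uIcc 0 1) :=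
    intervalIntegral.continuousOn_primitive_interval' i₁ right_mem_uIcc
  have c₂ : ContinuousOn (fun b => ∫ x in (0:ℝ)..b, F₂ x) (uIcc 0 1) :=
    intervalIntegral.continuousOn_primitive_interval' i₂ left_mem_uIcc
  rw [uIcc_of_le zero_le_one] at c₁ c₂
  have C : ContinuousOn (fun ε : ℝ => -(∫ x in (1:ℝ)..ε, F₁ x) + ∫ x in (0:ℝ)..(1-ε), F₂ x)
      (Icc 0 1) := by
    refine c₁.neg.add (c₂.comp (by fun_prop) ?_)
    intro x hx
    exact ⟨by linarith [hx.2], by linarith [hx.1]⟩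
  have C0 := (C 0 (by simp)).mono (Ioo_subset_Icc_self (a := (0:ℝ)) (b := 1))
  have T : Tendsto (fun ε : ℝ => -(∫ x in (1:ℝ)..ε, F₁ x) + ∫ x in (0:ℝ)..(1-ε), F₂ x)
    (𝓝[Ioo 0 1] 0) (𝓝 ((∫ x in (0:ℝ)..1, F₁ x) + ∫ x in (0:ℝ)..1, F₂ x)) := by
    have := C0.tendsto
    rwa [← intervalIntegral.integral_symm, sub_zero] at this
  have : (𝓝[Ioo (0:ℝ) 1] 0).NeBot := by
    rw [nhdsWithin_Ioo_eq_nhdsGT zero_lt_one]; infer_instance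
  refine le_of_tendsto T ?_
  filter_upwards [self_mem_nhdsWithin] with ε hε
  rw [← intervalIntegral.integral_symm]
  have sh : ∫ x in (0:ℝ)..(1-ε), F₂ x = ∫ x in ε..1, F₂ (x - ε) := by
    rw [intervalIntegral.integral_comp_sub_right, sub_self]
  rw [sh]
  have j₁ : IntervalIntegrable F₁ volume ε 1 := by
    refine i₁.mono_set ?_
    rw [uIcc_of_le zero_le_one, uIcc_of_le hε.2.le]
    exact Icc_subset_Icc_left hε.1.le
  have j₂ : IntervalIntegrable (fun x => F₂ (x - ε)) volume ε 1 := by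
    have : IntervalIntegrable F₂ volume 0 (1-ε) := by
      refine i₂.mono_set ?_
      rw [uIcc_of_le zero_le_one, uIcc_of_le (by linarith [hε.2])]
      exact Icc_subset_Icc_right (by linarith [hε.1])
    simpa using this.comp_sub_right ε
  rw [← intervalIntegral.integral_add j₁ j₂]
  have : ∫ x in ε..1, (F₁ x + F₂ (x - ε)) ≤ ∫ x in ε..1, (0:ℝ) := by
    refine intervalIntegral.integral_mono_on hε.2.le (j₁.add j₂) (by simp) ?_
    intro x hx
    have m1 : x ∈ Icc (0:ℝ) 1 := ⟨by linarith [hx.1, hε.1], hx.2⟩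
    have m2 : x - ε ∈ Icc (0:ℝ) 1 := ⟨by linarith [hx.1, hε.1], by linarith [hx.2, hε.1]⟩
    have hc : cEx ((⟨x, m1⟩ : unitInterval), (⟨x - ε, m2⟩ : unitInterval)) = 0 := by
      have a1 : ¬ (x < x - ε) := by linarith [hε.1]
      have a2 : ¬ (x = x - ε) := by linarith [hε.1]
      simp only [cEx]
      rw [if_neg a1, if_neg a2]
    have := h ⟨x, m1⟩ ⟨x - ε, m2⟩ (by rw [hc]; simp)
    rw [hc] at this
    simp only [hF₁, hF₂, Function.comp]
    rw [projIcc_of_mem _ m1, projIcc_of_mem _ m2]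
    simpa using this
  simpa using this

lemma partB_ge (Q : Measure (unitInterval × unitInterval)) [IsProbabilityMeasure Q]
    (h1 : Q.map Prod.fst = mI) (h2 : Q.map Prod.snd = mI) : 1 ≤ ∫⁻ p, cEx p ∂Q := by
  by_cases hz : Q Slt = 0
  · have m1 : Measurable (fun x : unitInterval => (x:ℝ)) := measurable_subtype_coe
    have bd : ∀ g : unitInterval × unitInterval → unitInterval, Measurable g →
        Integrable (fun p => (g p : ℝ)) Q := by
      intro g hg
      refine Integrable.of_bound (m1.comp hg).aestronglyMeasurable 1 (Eventually.of_forall ?_)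
      intro p
      rw [Real.norm_eq_abs, abs_le]
      exact ⟨by linarith [(g p).2.1], (g p).2.2⟩
    have b1 := bd Prod.fst measurable_fst
    have b2 := bd Prod.snd measurable_snd
    have e1 : ∫ p, (p.1 : ℝ) ∂Q = ∫ x : unitInterval, (x:ℝ) ∂mI := by
      rw [← h1, integral_map measurable_fst.aemeasurable m1.aestronglyMeasurable]
    have e2 : ∫ p, (p.2 : ℝ) ∂Q = ∫ x : unitInterval, (x:ℝ) ∂mI := by
      rw [← h2, integral_map measurable_snd.aemeasurable m1.aestronglyMeasurable]
    have hae : ∀ᵐ p ∂Q, (p.2:ℝ) ≤ (p.1:ℝ) := by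
      rw [ae_iff]
      convert hz using 2
      ext p; simp [Slt]
    have h0 : ∫ p, ((fun p : unitInterval × unitInterval => (p.1:ℝ)) -
        (fun p : unitInterval × unitInterval => (p.2:ℝ))) p ∂Q = 0 := by
      rw [integral_sub' b1 b2, e1, e2, sub_self]
    rw [integral_eq_zero_iff_of_nonneg_ae (by filter_upwards [hae] with p hp; simpa using hp)
      (b1.sub b2)] at h0
    have : ∫⁻ p, cEx p ∂Q = ∫⁻ p, 1 ∂Q := by
      refine lintegral_congr_ae ?_
      filter_upwards [h0] with p hp
      have hp' : (p.1:ℝ) = p.2 := by simpa [sub_eq_zero] using hp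
      unfold cEx
      rw [if_neg (by rw [hp']; exact lt_irrefl _), if_pos hp']
    rw [this]; simp
  · have : ∫⁻ p in Slt, (⊤:ℝ≥0∞) ∂Q ≤ ∫⁻ p, cEx p ∂Q := by
      rw [← lintegral_indicator measSlt]
      refine lintegral_mono ?_
      intro p
      by_cases hp : p ∈ Slt
      · rw [indicator_of_mem hp]
        have hp' : (p.1:ℝ) < p.2 := hp
        simp [cEx, hp']
      · rw [indicator_of_notMem hp]; exact zero_le
    rw [setLIntegral_const, ENNReal.top_mul hz] at this
    exact le_trans le_top this

lemma partB : (⨅ Q : {Q : Measure (unitInterval × unitInterval) // IsProbabilityMeasure Q ∧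
        Q.map Prod.fst = mI ∧ Q.map Prod.snd = mI}, ∫⁻ p, cEx p ∂Q.1) = 1 := by
  apply le_antisymm
  · have hm : Measurable (fun x : unitInterval => (x, x)) := measurable_id.prodMk measurable_id
    refine (iInf_le _ ⟨TI, ?p1, ?p2, ?p3⟩).trans ?_
    case p1 =>
      exact Measure.isProbabilityMeasure_map hm.aemeasurable
    case p2 =>
      unfold TI
      rw [Measure.map_map measurable_fst hm]; exact Measure.map_id
    case p3 =>
      unfold TI
      rw [Measure.map_map measurable_snd hm]; exact Measure.map_id
    · refine (lintegral_map_le _ _).trans ?_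
      simp [cEx]
  · refine le_iInf ?_
    rintro ⟨Q, hQ, h1, h2⟩
    exact partB_ge Q h1 h2

lemma partC (P : MSet (unitInterval × unitInterval) → unitInterval)
    (hP : IsFAP P) (h : (P ⟨Sgt, measSgt⟩ : ℝ) = 1) : fapIntTop P cEx = 0 := by
  have hz : ∀ A : MSet (unitInterval × unitInterval), Disjoint A.1 Sgt → (P A : ℝ) = 0 := by
    intro A hA
    have h1 := hP.2 A ⟨Sgt, measSgt⟩ hA
    have h2 := (P ⟨A.1 ∪ Sgt, A.2.union measSgt⟩).2.2
    have h3 := (P A).2.1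
    simp only at h1
    linarith
  unfold fapIntTop
  rw [ENNReal.iSup_eq_zero]
  intro k
  rw [ENNReal.ofReal_eq_zero]
  unfold fapInt
  refine Real.sSup_nonpos ?_
  rintro _ ⟨s, hs, rfl⟩
  unfold simpleInt
  refine Finset.sum_nonpos ?_
  intro y _
  rcases le_or_gt y 0 with hy | hy
  · exact mul_nonpos_of_nonpos_of_nonneg hy (P _).2.1
  · rw [hz, mul_zero]
    rw [Set.disjoint_left]
    intro p hp hpg
    have h1 := hs p
    have hp' : s p = y := hp
    have hpg' : (p.2:ℝ) < p.1 := hpg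
    have : cEx p = 0 := by
      unfold cEx
      rw [if_neg (by linarith), if_neg (by linarith)]
    simp only at h1
    rw [hp', this] at h1
    simp at h1
    linarith

lemma exists_fap : ∃ P : MSet (unitInterval × unitInterval) → unitInterval,
    IsFAP P ∧ HasLebesgueMarginals P ∧ (P ⟨Sgt, measSgt⟩ : ℝ) = 1 := by
  let e : ℕ → ℝ := fun n => 1 / ((n:ℝ) + 1)
  have he : ∀ n, 0 < e n := fun n => by positivity
  have het : Tendsto e atTop (𝓝 0) := tendsto_one_div_add_atTop_nhds_zero_nat
  let Q : ℕ → Measure (unitInterval × unitInterval) := fun n => mI.map (fun x => (x, rot (e n) x))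
  have hm : ∀ n, Measurable (fun x => (x, rot (e n) x)) :=
    fun n => measurable_id.prodMk (rot_mp (e n)).measurable
  have hQ : ∀ n, IsProbabilityMeasure (Q n) :=
    fun n => Measure.isProbabilityMeasure_map (hm n).aemeasurable
  have hQ1 : ∀ n, (Q n).map Prod.fst = mI := fun n => by
    simp only [Q]
    rw [Measure.map_map measurable_fst (hm n)]; exact Measure.map_id
  have hQ2 : ∀ n, (Q n).map Prod.snd = mI := fun n => by
    simp only [Q]
    rw [Measure.map_map measurable_snd (hm n)]; exact (rot_mp (e n)).map_eq
  let q : ℕ → MSet (unitInterval × unitInterval) → unitInterval :=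
    fun n A => ⟨(Q n A.1).toReal, ENNReal.toReal_nonneg, by
      have := hQ n
      exact ENNReal.toReal_le_of_le_ofReal zero_le_one (by simpa using prob_le_one)⟩
  let U : Ultrafilter ℕ := hyperfilter ℕ
  have hU : (U : Filter ℕ) ≤ atTop := by
    rw [← Nat.cofinite_eq_atTop]; exact hyperfilter_le_cofinite
  obtain ⟨P, -, hP⟩ := isCompact_univ.ultrafilter_le_nhds (U.map q) (by simp)
  have hT : Tendsto q U (𝓝 P) := hP
  have hA : ∀ A, Tendsto (fun n => (Q n A.1).toReal) U (𝓝 (P A : ℝ)) := fun A =>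
    (continuous_subtype_val.tendsto _).comp (((continuous_apply A).tendsto P).comp hT)
  refine ⟨P, ⟨?_, ?_⟩, ⟨?_, ?_⟩, ?_⟩
  · refine tendsto_nhds_unique (hA _) ?_
    simp
  · intro A B hd
    refine tendsto_nhds_unique (hA _) (((hA A).add (hA B)).congr ?_)
    intro n
    have := hQ n
    simp only
    rw [measure_union hd B.2, ENNReal.toReal_add (measure_ne_top _ _) (measure_ne_top _ _)]
  · intro B hB
    refine tendsto_nhds_unique (hA _) (tendsto_const_nhds.congr ?_)
    intro n
    rw [← hQ1 n, Measure.map_apply measurable_fst hB]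
  · intro B hB
    refine tendsto_nhds_unique (hA _) (tendsto_const_nhds.congr ?_)
    intro n
    rw [← hQ2 n, Measure.map_apply measurable_snd hB]
  · refine le_antisymm (P _).2.2 ?_
    have l1 : Tendsto (fun n => 1 - e n) U (𝓝 1) := by
      simpa using (tendsto_const_nhds (x := (1:ℝ))).sub (het.mono_left hU)
    refine le_of_tendsto_of_tendsto' l1 (hA ⟨Sgt, measSgt⟩) ?_
    intro n
    have := hQ n
    have hle : e n ≤ 1 := by
      simp only [e]
      rw [div_le_one (by positivity)]
      linarith [(Nat.cast_nonneg n : (0:ℝ) ≤ n)]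
    let z : unitInterval := ⟨e n, (he n).le, hle⟩
    have v : mI (Ioi z) = ENNReal.ofReal (1 - e n) := unitInterval.volume_Ioi z
    have : ENNReal.ofReal (1 - e n) ≤ Q n Sgt := by
      rw [← v]
      simp only [Q]
      rw [Measure.map_apply (hm n) measSgt]
      refine measure_mono ?_
      intro x hx
      exact rot_lt (e n) (he n) x hx
    exact (ENNReal.ofReal_le_iff_le_toReal (measure_ne_top _ _)).1 this

/-- for the cost `c` above: (a) any integrable `f₁, f₂` with
`f₁(x) + f₂(y) ≤ c(x,y)` pointwise satisfy `m(f₁) + m(f₂) ≤ 0`; (b) `inf_{Q ∈ Γ} Q(c) = 1`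
(duality gap over σ-additive couplings); (c) any finitely additive `P ∈ M` with
`P(π₁ > π₂) = 1` has `P(c) = 0`; (d) `inf_{Q ∈ M} Q(c) = 0`; and (e) the dual supremum
over `M` equals `0` as well, i.e. duality holds over `M`. (The pointwise constraint
`f₁(x) + f₂(y) ≤ c(x,y)` with `c` `[0,∞]`-valued is encoded via `toReal` and `⊤`.) -/
theorem duality_gap_example :
    (∀ f₁ f₂ : unitInterval → ℝ, Measurable f₁ → Measurable f₂ →
      Integrable f₁ mI → Integrable f₂ mI →
      (∀ x y : unitInterval, cEx (x, y) ≠ ⊤ → f₁ x + f₂ y ≤ (cEx (x, y)).toReal) →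
      (∫ x, f₁ x ∂mI) + (∫ y, f₂ y ∂mI) ≤ 0) ∧
    ((⨅ Q : {Q : Measure (unitInterval × unitInterval) // IsProbabilityMeasure Q ∧
        Q.map Prod.fst = mI ∧ Q.map Prod.snd = mI}, ∫⁻ p, cEx p ∂Q.1) = 1) ∧
    (∀ P : MSet (unitInterval × unitInterval) → unitInterval,
      IsFAP P → HasLebesgueMarginals P → (P ⟨Sgt, measSgt⟩ : ℝ) = 1 →
        fapIntTop P cEx = 0) ∧
    ((⨅ P : {P : MSet (unitInterval × unitInterval) → unitInterval //
        IsFAP P ∧ HasLebesgueMarginals P}, fapIntTop P.1 cEx) = 0) ∧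
    ((⨆ (f : (unitInterval → ℝ) × (unitInterval → ℝ))
        (_ : Measurable f.1 ∧ Measurable f.2 ∧ Integrable f.1 mI ∧ Integrable f.2 mI ∧
          ∀ x y : unitInterval,
            f.1 x + f.2 y ≤ (cEx (x, y)).toReal ∨ cEx (x, y) = ⊤),
        ENNReal.ofReal ((∫ x, f.1 x ∂mI) + (∫ y, f.2 y ∂mI))) = 0) := by
  refine ⟨fun f₁ f₂ _ _ h₁ h₂ h => partA f₁ f₂ h₁ h₂ h, partB, fun P hP _ h => partC P hP h, ?_, ?_⟩
  · obtain ⟨P, hP, hM, h⟩ := exists_fap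
    refine le_antisymm ((iInf_le _ ⟨P, hP, hM⟩).trans ?_) zero_le
    exact (partC P hP h).le
  · refine le_antisymm (iSup₂_le ?_) zero_le
    rintro ⟨f₁, f₂⟩ ⟨_, _, h₁, h₂, h⟩
    rw [ENNReal.ofReal_of_nonpos]
    refine partA f₁ f₂ h₁ h₂ ?_
    intro x y hxy
    exact (h x y).resolve_right hxy

end FATransport
end
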